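/- Let f be a cellular automaton on a ℤ^d-subshift and O a convex domain with unit perimeter. Then for every k ∈ ℕ, the rescaled entropy satisfies h^d_*(f^k, O) = k·h^d_*(f, O), where h^d_*(f, O) = sup over convex exhaustions 𝒥 = (J_n) with limit O of limsup_n h_*(f, 𝖯_{J_n})/p(J_n). -/

import Mathlib

open Set MeasureTheory Filter Topology Pointwise

/-- The group `ℤ^d`. -/
abbrev Zd (d : ℕ) := Fin d → ℤ

/-- Configurations `𝒜^{ℤ^d}` with the product topology (`A` discrete). -/
abbrev Config (A : Type*) (d : ℕ) := Zd d → A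

/-- The shift action of `ℤ^d`. -/
def shift {A : Type*} {d : ℕ} (l : Zd d) (x : Config A d) : Config A d := fun k => x (k + l)

/-- Embedding of `ℤ^d` in `ℝ^d`. -/
noncomputable def emb {d : ℕ} (z : Zd d) : EuclideanSpace ℝ (Fin d) :=
  (WithLp.equiv 2 (Fin d → ℝ)).symm fun i => (z i : ℝ)

/-- The lattice points of a subset `J` of `ℝ^d`, as a subset of `ℤ^d`. -/
def latOf {d : ℕ} (J : Set (EuclideanSpace ℝ (Fin d))) : Set (Zd d) := {z | emb z ∈ J}

/-- Perimeter: the `(d-1)`-dimensional Hausdorff measure of the boundary. -/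
noncomputable def per {d : ℕ} (J : Set (EuclideanSpace ℝ (Fin d))) : ℝ :=
  (μH[(d : ℝ) - 1] (frontier J)).toReal

/-- A convex exhaustion with limit `O`: convex domains whose perimeters tend to infinity
and whose rescalings by `p(J_n)^{-1/(d-1)}` converge to `O` in the Hausdorff metric. -/
def IsExhaustion {d : ℕ} (O : Set (EuclideanSpace ℝ (Fin d)))
    (J : ℕ → Set (EuclideanSpace ℝ (Fin d))) : Prop :=
  (∀ n, IsCompact (J n) ∧ Convex ℝ (J n) ∧ 0 ∈ interior (J n)) ∧
  Tendsto (fun n => per (J n)) atTop atTop ∧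
  Tendsto (fun n => Metric.hausdorffDist ((per (J n) ^ (-((d : ℝ) - 1)⁻¹)) • J n) O)
    atTop (𝓝 0)

/-- Topological entropy `h_top(f, 𝖯_L)` of `f` relative to the partition of `X` into
`L`-cylinders. -/
noncomputable def topPartEnt {A : Type*} {d : ℕ} (f : Config A d → Config A d)
    (X : Set (Config A d)) (L : Set (Zd d)) : ℝ :=
  limsup (fun n : ℕ =>
    Real.log (Nat.card ((fun x => fun (k : Fin n) (j : L) => f^[k] x (j : Zd d)) '' X)) / n)
    atTop

/-- Measure-theoretic entropy `h_μ(f, 𝖯_L)` of `f` relative to the partition into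
`L`-cylinders. -/
noncomputable def measPartEnt {A : Type*} {d : ℕ} [MeasurableSpace A]
    (μ : Measure (Config A d)) (f : Config A d → Config A d) (L : Set (Zd d)) : ℝ :=
  limsup (fun n : ℕ =>
    (∑' Q : Fin n → L → A,
      Real.negMulLog
        (μ {x | ∀ (k : Fin n) (j : L), f^[k] x (j : Zd d) = Q k j}).toReal) / n) atTop

/-- Rescaled topological entropy `h^d_top(f, O)`: supremum over convex exhaustions with
limit `O` of `limsup_n h_top(f, 𝖯_{J_n}) / p(J_n)`. -/
noncomputable def topRescEnt {A : Type*} {d : ℕ} (f : Config A d → Config A d)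
    (X : Set (Config A d)) (O : Set (EuclideanSpace ℝ (Fin d))) : ℝ :=
  sSup {h | ∃ J, IsExhaustion O J ∧
    h = limsup (fun n => topPartEnt f X (latOf (J n)) / per (J n)) atTop}

/-- Rescaled measure-theoretic entropy `h^d_μ(f, O)`. -/
noncomputable def measRescEnt {A : Type*} {d : ℕ} [MeasurableSpace A]
    (μ : Measure (Config A d)) (f : Config A d → Config A d)
    (O : Set (EuclideanSpace ℝ (Fin d))) : ℝ :=
  sSup {h | ∃ J, IsExhaustion O J ∧
    h = limsup (fun n => measPartEnt μ f (latOf (J n)) / per (J n)) atTop}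

section Geometry

variable {d : ℕ}

/-- The length scale `p(J)^{1/(d-1)}` attached to a domain. -/
noncomputable def lengthScale (J : Set (EuclideanSpace ℝ (Fin d))) : ℝ :=
  per J ^ ((d : ℝ) - 1)⁻¹

lemma per_nonneg (J : Set (EuclideanSpace ℝ (Fin d))) : 0 ≤ per J := ENNReal.toReal_nonneg

lemma lengthScale_nonneg (J : Set (EuclideanSpace ℝ (Fin d))) : 0 ≤ lengthScale J :=
  Real.rpow_nonneg (per_nonneg J) _

lemma per_rpow_neg (J : Set (EuclideanSpace ℝ (Fin d))) :
    per J ^ (-((d : ℝ) - 1)⁻¹) = (lengthScale J)⁻¹ :=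
  Real.rpow_neg (per_nonneg J) _

lemma lengthScale_pow (hd : 2 ≤ d) (J : Set (EuclideanSpace ℝ (Fin d))) :
    lengthScale J ^ (d - 1) = per J := by
  have hd' : ((d - 1 : ℕ) : ℝ) = (d : ℝ) - 1 := by
    rw [Nat.cast_sub (by lia)]; simp
  rw [lengthScale, ← hd']
  exact Real.rpow_inv_natCast_pow (per_nonneg J) (by lia)

lemma per_smul (hd : 2 ≤ d) {c : ℝ} (hc : 0 < c) (J : Set (EuclideanSpace ℝ (Fin d))) :
    per (c • J) = c ^ (d - 1) * per J := by
  have hd' : ((d - 1 : ℕ) : ℝ) = (d : ℝ) - 1 := by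
    rw [Nat.cast_sub (by lia)]; simp
  have hfr : frontier (c • J) = c • frontier J :=
    ((Homeomorph.smulOfNeZero c hc.ne').image_frontier J).symm
  rw [per, per, hfr, ← hd', Measure.hausdorffMeasure_smul₀ (by positivity) hc.ne',
    ENNReal.smul_def, smul_eq_mul, ENNReal.toReal_mul]
  simp [abs_of_pos hc]

lemma lengthScale_smul (hd : 2 ≤ d) {c : ℝ} (hc : 0 < c)
    (J : Set (EuclideanSpace ℝ (Fin d))) :
    lengthScale (c • J) = c * lengthScale J := by
  have hd' : ((d - 1 : ℕ) : ℝ) = (d : ℝ) - 1 := by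
    rw [Nat.cast_sub (by lia)]; simp
  rw [lengthScale, lengthScale, per_smul hd hc, Real.mul_rpow (by positivity) (per_nonneg J),
    ← hd', Real.pow_rpow_inv_natCast hc.le (by lia)]

lemma exists_mem_frontier_inner_pos {E : Type*} [NormedAddCommGroup E] [InnerProductSpace ℝ E]
    {O : Set E} (hO : IsCompact O) (h0 : 0 ∈ interior O) {e : E} (he : e ≠ 0) :
    ∃ x ∈ frontier O, 0 < inner ℝ e x := by
  have push : ∀ x ∈ interior O, ∃ y ∈ O, inner ℝ e x < inner ℝ e y := by
    intro x hx
    obtain ⟨δ, hδ, hball⟩ := Metric.isOpen_iff.1 isOpen_interior x hx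
    have hn : 0 < ‖e‖ := norm_pos_iff.2 he
    refine ⟨x + (δ / (2 * ‖e‖)) • e, interior_subset (hball ?_), ?_⟩
    · rw [Metric.mem_ball, dist_self_add_left, norm_smul, Real.norm_of_nonneg (by positivity)]
      field_simp
      linarith
    · rw [inner_add_right, inner_smul_right, real_inner_self_eq_norm_sq]
      have : 0 < δ / (2 * ‖e‖) * ‖e‖ ^ 2 := by positivity
      linarith
  obtain ⟨x, hxO, hmax⟩ := hO.exists_isMaxOn ⟨0, interior_subset h0⟩
    (f := fun x => inner ℝ e x) (by fun_prop)
  refine ⟨x, ⟨subset_closure hxO, fun hx => ?_⟩, ?_⟩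
  · obtain ⟨y, hy, hlt⟩ := push x hx
    exact absurd (hmax hy) (not_le.2 hlt)
  · obtain ⟨y, hy, hlt⟩ := push 0 h0
    rw [inner_zero_right] at hlt
    exact hlt.trans_le (hmax hy)

lemma two_le_of_per_eq_one {O : Set (EuclideanSpace ℝ (Fin d))} (hO : IsCompact O)
    (h0 : 0 ∈ interior O) (hper : per O = 1) : 2 ≤ d := by
  by_contra! hd
  interval_cases d
  · have hO' : O = univ := by
      ext x
      simpa [Subsingleton.elim x 0] using interior_subset h0
    simp [per, hO'] at hper
  · have he : (EuclideanSpace.single 0 1 : EuclideanSpace ℝ (Fin 1)) ≠ 0 := by simp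
    obtain ⟨x, hx, hx'⟩ := exists_mem_frontier_inner_pos hO h0 he
    obtain ⟨y, hy, hy'⟩ := exists_mem_frontier_inner_pos hO h0 (neg_ne_zero.2 he)
    have hxy : x ≠ y := by
      rintro rfl
      rw [inner_neg_left] at hy'
      linarith
    have hone : μH[0] (frontier O) = 1 := by
      simpa [per, ENNReal.toReal_eq_one_iff] using hper
    have htwo : μH[0] ({x, y} : Set (EuclideanSpace ℝ (Fin 1))) = 1 + 1 := by
      rw [← union_singleton, union_comm, measure_union (by simpa using hxy)
        (measurableSet_singleton y), Measure.hausdorffMeasure_zero_singleton,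
        Measure.hausdorffMeasure_zero_singleton]
    have hle := measure_mono (μ := μH[0]) (insert_subset hx (singleton_subset_iff.2 hy))
    rw [htwo, hone, one_add_one_eq_two] at hle
    exact absurd hle (by norm_num)

lemma ball_subset_of_hausdorffDist_lt {E : Type*} [NormedAddCommGroup E] [InnerProductSpace ℝ E]
    [CompleteSpace E] {S O : Set E} (hS : IsCompact S) (hSc : Convex ℝ S) (hSn : S.Nonempty)
    (hO : IsCompact O) {r ε : ℝ} (hε : 0 < ε) (hball : Metric.ball 0 (r + ε) ⊆ O)
    (hdist : Metric.hausdorffDist S O < ε) : Metric.ball 0 r ⊆ S := by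
  intro y hy
  by_contra hyS
  obtain ⟨g, u, hgS, hgy⟩ := geometric_hahn_banach_closed_point hSc hS.isClosed hyS
  set v := (InnerProductSpace.toDual ℝ E).symm g
  have hv : ∀ z, g z = inner ℝ v z := fun z => by simp [v]
  have hv0 : 0 < ‖v‖ := by
    obtain ⟨s, hs⟩ := hSn
    refine norm_pos_iff.2 fun h => ?_
    have h1 := hgS s hs
    rw [hv, h, inner_zero_left] at h1 hgy
    linarith
  have hw : y + (ε / ‖v‖) • v ∈ O := by
    apply hball
    rw [mem_ball_zero_iff] at hy ⊢
    refine (norm_add_le _ _).trans_lt ?_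
    rw [norm_smul, Real.norm_of_nonneg (by positivity), div_mul_cancel₀ _ hv0.ne']
    linarith
  obtain ⟨s, hs, hsd⟩ := Metric.exists_dist_lt_of_hausdorffDist_lt' hw hdist
    (Metric.hausdorffEDist_ne_top_of_nonempty_of_bounded hSn ⟨_, hw⟩ hS.isBounded hO.isBounded)
  have h1 := real_inner_le_norm v (y + (ε / ‖v‖) • v - s)
  rw [← dist_eq_norm, dist_comm, inner_sub_right, inner_add_right, inner_smul_right,
    real_inner_self_eq_norm_sq, ← hv, ← hv] at h1
  have h2 := hgS s hs
  have h3 : ε / ‖v‖ * ‖v‖ ^ 2 = ε * ‖v‖ := by field_simp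
  nlinarith

lemma add_mem_add_smul {E : Type*} [NormedAddCommGroup E] [NormedSpace ℝ E]
    {J : Set E} (hJ : Convex ℝ J) {r R a : ℝ} (hr : 0 < r) (hR : 0 < R) (ha : 0 ≤ a)
    (hball : Metric.ball 0 r ⊆ J) {z w : E} (hz : z ∈ a • J) (hw : ‖w‖ ≤ R) :
    z + w ∈ (a + 2 * R / r) • J := by
  rw [hJ.add_smul ha (by positivity)]
  refine add_mem_add hz ⟨(2 * R / r)⁻¹ • w, hball ?_, smul_inv_smul₀ (by positivity) w⟩
  rw [mem_ball_zero_iff, norm_smul, norm_inv, Real.norm_of_nonneg (by positivity), inv_div]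
  calc r / (2 * R) * ‖w‖ ≤ r / (2 * R) * R := by gcongr
    _ = r / 2 := by field_simp
    _ < r := by linarith

lemma norm_emb_sub_ge_one {z w : Zd d} (h : z ≠ w) : 1 ≤ ‖emb z - emb w‖ := by
  obtain ⟨i, hi⟩ := Function.ne_iff.1 h
  have h1 : (1 : ℝ) ≤ |(z i : ℝ) - w i| := by
    exact_mod_cast Int.one_le_abs (sub_ne_zero.2 hi)
  refine h1.trans ?_
  simpa [emb] using PiLp.norm_apply_le (emb z - emb w) i

lemma finite_latOf {J : Set (EuclideanSpace ℝ (Fin d))} (hJ : Bornology.IsBounded J) :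
    (latOf J).Finite := by
  obtain ⟨M, hM⟩ := hJ.exists_norm_le
  refine (Set.finite_Icc (fun _ => -⌈M⌉ : Zd d) (fun _ => ⌈M⌉)).subset fun z hz => ?_
  have hi : ∀ i, |z i| ≤ ⌈M⌉ := fun i => by
    have h1 : |(z i : ℝ)| ≤ ‖emb z‖ := by
      simpa [emb] using PiLp.norm_apply_le (emb z) i
    have h2 : ((|z i| : ℤ) : ℝ) ≤ (⌈M⌉ : ℤ) := by
      push_cast
      exact h1.trans ((hM _ hz).trans (Int.le_ceil M))
    exact_mod_cast h2
  exact ⟨fun i => (abs_le.1 (hi i)).1, fun i => (abs_le.1 (hi i)).2⟩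

/-- The number of lattice points in a set is controlled by the volume of its neighbourhood. -/
lemma ncard_mul_volume_ball_le {D : Set (Zd d)} (hD : D.Finite)
    {U : Set (EuclideanSpace ℝ (Fin d))} (hU : volume U ≠ ⊤)
    (hDU : ∀ z ∈ D, Metric.ball (emb z) (1 / 2) ⊆ U) :
    (D.ncard : ℝ) * volume.real (Metric.ball (0 : EuclideanSpace ℝ (Fin d)) (1 / 2)) ≤
      volume.real U := by
  have hdisj : (hD.toFinset : Set (Zd d)).PairwiseDisjoint
      fun z => Metric.ball (emb z) (1 / 2 : ℝ) := by
    intro z _ w _ hzw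
    refine Metric.ball_disjoint_ball ?_
    rw [dist_eq_norm]
    linarith [norm_emb_sub_ge_one hzw]
  have hunion := measureReal_biUnion_finset (μ := volume) hdisj
    (fun _ _ => Metric.isOpen_ball.measurableSet) (fun _ _ => measure_ball_lt_top.ne)
  have hball : ∀ z : Zd d, volume.real (Metric.ball (emb z) (1 / 2 : ℝ)) =
      volume.real (Metric.ball (0 : EuclideanSpace ℝ (Fin d)) (1 / 2)) := fun z => by
    rw [measureReal_def, measureReal_def, Measure.addHaar_ball_center]
  simp only [hball, Finset.sum_const, nsmul_eq_mul] at hunion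
  rw [Set.ncard_eq_toFinset_card D hD, ← hunion]
  exact measureReal_mono (iUnion₂_subset fun z hz => hDU z (hD.mem_toFinset.1 hz)) hU

lemma ncard_latOf_smul_diff_le {J : Set (EuclideanSpace ℝ (Fin d))} (hJc : IsCompact J)
    (hJ : Convex ℝ J) {r s : ℝ} (hr : 0 < r) (hs1 : s ≤ 1) (hs : 2 / r ≤ s)
    (hball : Metric.ball 0 r ⊆ J) :
    ((latOf ((1 + s) • J) \ latOf J).ncard : ℝ) *
      volume.real (Metric.ball (0 : EuclideanSpace ℝ (Fin d)) (1 / 2)) ≤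
      s * (d * 3 ^ d) * volume.real J := by
  have hs0 : 0 < s := lt_of_lt_of_le (by positivity) hs
  have h0 : (0 : EuclideanSpace ℝ (Fin d)) ∈ J := hball (Metric.mem_ball_self hr)
  have hmono : ∀ {a b : ℝ}, 0 ≤ a → a ≤ b → a • J ⊆ b • J := by
    rintro a b ha hab _ ⟨x, hx, rfl⟩
    rcases ha.eq_or_lt with rfl | ha
    · exact ⟨0, h0, by simp⟩
    · have hb : 0 < b := ha.trans_le hab
      refine ⟨(a / b) • x, hJ.smul_mem_of_zero_mem h0 hx ⟨by positivity, ?_⟩, ?_⟩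
      · exact div_le_one_of_le₀ hab (by linarith)
      · simp only [smul_smul]
        rw [mul_div_cancel₀ _ hb.ne']
  have hadd : ∀ {a : ℝ}, 0 ≤ a → ∀ {z w : EuclideanSpace ℝ (Fin d)}, z ∈ a • J → ‖w‖ ≤ 1 →
      z + w ∈ (a + s) • J := fun {a} ha z w hz hw => by
    refine hmono (by positivity) ?_ (add_mem_add_smul hJ hr one_pos ha hball hz hw)
    linarith
  have hvol : ∀ a : ℝ, 0 ≤ a → volume.real (a • J) = a ^ d * volume.real J := fun a ha => by
    rw [measureReal_def, Measure.addHaar_smul, ENNReal.toReal_mul, measureReal_def,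
      ENNReal.toReal_ofReal (abs_nonneg _), finrank_euclideanSpace_fin,
      abs_of_nonneg (by positivity)]
  have hfin : ∀ a : ℝ, volume (a • J) ≠ ⊤ := fun a => (hJc.smul a).measure_lt_top.ne
  have hcount := ncard_mul_volume_ball_le (U := (1 + s + s) • J \ (1 - s) • J)
    ((finite_latOf (hJc.smul (1 + s)).isBounded).sdiff (t := latOf J))
    (measure_ne_top_of_subset sdiff_subset (hfin _)) (by
      rintro z ⟨hz, hzJ⟩ y hy
      rw [Metric.mem_ball, dist_eq_norm] at hy
      refine ⟨?_, fun hy' => hzJ ?_⟩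
      · simpa using hadd (by positivity) hz (w := y - emb z) (by linarith)
      · have := hadd (by linarith) hy' (w := emb z - y) (by rw [norm_sub_rev]; linarith)
        simpa [latOf] using this)
  refine hcount.trans ?_
  rw [measureReal_sdiff (hmono (by linarith) (by linarith)) (hJc.smul _).measurableSet (hfin _),
    hvol _ (by positivity), hvol _ (by linarith), ← sub_mul]
  refine mul_le_mul_of_nonneg_right ?_ measureReal_nonneg
  have hpow := (le_abs_self _).trans (abs_pow_sub_pow_le (1 + s + s) (1 - s) d)
  refine hpow.trans ?_
  have hmax : max |1 + s + s| |1 - s| ≤ 3 := by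
    rw [abs_of_nonneg (by positivity), abs_of_nonneg (by linarith)]
    exact max_le (by linarith) (by linarith)
  have habs : |1 + s + s - (1 - s)| = 3 * s := by
    rw [abs_of_nonneg (by linarith)]; ring
  rw [habs]
  rcases d with _ | d
  · simp
  · rw [Nat.add_sub_cancel]
    calc 3 * s * ((d + 1 : ℕ) : ℝ) * max |1 + s + s| |1 - s| ^ d
        ≤ 3 * s * ((d + 1 : ℕ) : ℝ) * 3 ^ d := by gcongr
      _ = s * (((d + 1 : ℕ) : ℝ) * 3 ^ (d + 1)) := by ring

namespace IsExhaustion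

variable {O : Set (EuclideanSpace ℝ (Fin d))} {J : ℕ → Set (EuclideanSpace ℝ (Fin d))}

lemma tendsto_lengthScale (hd : 2 ≤ d) (hJ : IsExhaustion O J) :
    Tendsto (fun n => lengthScale (J n)) atTop atTop := by
  refine (tendsto_rpow_atTop (inv_pos.2 ?_)).comp hJ.2.1
  have : (2 : ℝ) ≤ d := by exact_mod_cast hd
  linarith

lemma eventually_ball_subset (hd : 2 ≤ d) (hO : IsCompact O) (hJ : IsExhaustion O J) {ε M : ℝ}
    (hε : 0 < ε) (hball : Metric.ball 0 (ε + ε) ⊆ O) (hM : O ⊆ Metric.closedBall 0 M) :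
    ∀ᶠ n in atTop, Metric.ball 0 (ε * lengthScale (J n)) ⊆ J n ∧
      J n ⊆ Metric.closedBall 0 ((M + ε) * lengthScale (J n)) := by
  filter_upwards [hJ.2.2.eventually (gt_mem_nhds hε),
    (hJ.tendsto_lengthScale hd).eventually (eventually_gt_atTop 0)] with n hn hpos
  obtain ⟨hc, hconv, h0⟩ := hJ.1 n
  rw [per_rpow_neg] at hn
  have hSne : ((lengthScale (J n))⁻¹ • J n).Nonempty := ⟨0, 0, interior_subset h0, smul_zero _⟩
  have hsub := ball_subset_of_hausdorffDist_lt (hc.smul _) (hconv.smul _) hSne hO hε hball hn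
  refine ⟨fun x hx => ?_, fun x hx => ?_⟩
  · have hx' : (lengthScale (J n))⁻¹ • x ∈ Metric.ball (0 : EuclideanSpace ℝ (Fin d)) ε := by
      rw [mem_ball_zero_iff] at hx ⊢
      rw [norm_smul, norm_inv, Real.norm_of_nonneg hpos.le, inv_mul_lt_iff₀ hpos, mul_comm]
      exact hx
    exact (smul_mem_smul_set_iff₀ (inv_ne_zero hpos.ne') _ _).1 (hsub hx')
  · have hx' := smul_mem_smul_set (a := (lengthScale (J n))⁻¹) hx
    obtain ⟨y, hy, hxy⟩ := Metric.exists_dist_lt_of_hausdorffDist_lt hx' hn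
      (Metric.hausdorffEDist_ne_top_of_nonempty_of_bounded hSne
        ⟨0, hball (Metric.mem_ball_self (by positivity))⟩ (hc.smul _).isBounded hO.isBounded)
    have hy' := mem_closedBall_zero_iff.1 (hM hy)
    rw [dist_eq_norm] at hxy
    have hle := norm_le_norm_add_norm_sub y ((lengthScale (J n))⁻¹ • x)
    rw [norm_sub_rev, norm_smul, norm_inv, Real.norm_of_nonneg hpos.le] at hle
    have hle' : (lengthScale (J n))⁻¹ * ‖x‖ ≤ M + ε := by linarith
    rw [inv_mul_le_iff₀ hpos, mul_comm] at hle'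
    exact mem_closedBall_zero_iff.2 hle'

lemma smul (hd : 2 ≤ d) (hJ : IsExhaustion O J) {c : ℕ → ℝ} (hc : ∀ n, 1 ≤ c n) :
    IsExhaustion O fun n => c n • J n := by
  have hpos : ∀ n, 0 < c n := fun n => one_pos.trans_le (hc n)
  refine ⟨fun n => ⟨(hJ.1 n).1.smul _, (hJ.1 n).2.1.smul _, ?_⟩, ?_, ?_⟩
  · rw [interior_smul₀ (hpos n).ne']
    exact ⟨0, (hJ.1 n).2.2, smul_zero _⟩
  · refine tendsto_atTop_mono (fun n => ?_) hJ.2.1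
    rw [per_smul hd (hpos n)]
    exact le_mul_of_one_le_left (per_nonneg _) (one_le_pow₀ (hc n))
  · refine hJ.2.2.congr fun n => ?_
    rw [per_rpow_neg, per_rpow_neg, lengthScale_smul hd (hpos n), smul_smul, mul_inv,
      mul_right_comm, inv_mul_cancel₀ (hpos n).ne', one_mul]

/-- An exhaustion can be dilated by factors tending to `1` so as to absorb a fixed neighbourhood,
at the cost of boundedly many lattice points per unit of perimeter. -/
theorem exists_dilation (hd : 2 ≤ d) (hO : IsCompact O) (h0 : 0 ∈ interior O) {R : ℝ}
    (hR : 1 ≤ R) :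
    ∃ C : ℝ, ∀ J, IsExhaustion O J → ∃ c : ℕ → ℝ, (∀ n, 1 ≤ c n) ∧ Tendsto c atTop (𝓝 1) ∧
      ∀ᶠ n in atTop, (∀ z ∈ J n, ∀ w, ‖w‖ ≤ R → z + w ∈ c n • J n) ∧
        ((latOf (c n • J n) \ latOf (J n)).ncard : ℝ) ≤ C * per (J n) := by
  obtain ⟨δ, hδ, hball⟩ := Metric.isOpen_iff.1 isOpen_interior 0 h0
  obtain ⟨M, hM⟩ := hO.isBounded.subset_closedBall (0 : EuclideanSpace ℝ (Fin d))
  obtain ⟨ε, hε, rfl⟩ : ∃ ε : ℝ, 0 < ε ∧ δ = ε + ε := ⟨δ / 2, by positivity, by ring⟩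
  have hball' := hball.trans interior_subset
  have hM0 : 0 ≤ M := by
    simpa using hM (interior_subset h0)
  set v₀ := volume.real (Metric.ball (0 : EuclideanSpace ℝ (Fin d)) (1 / 2)) with hv₀
  set v₁ := volume.real (Metric.closedBall (0 : EuclideanSpace ℝ (Fin d)) 1) with hv₁
  have hv₀pos : 0 < v₀ := ENNReal.toReal_pos (Metric.measure_ball_pos _ _ (by norm_num)).ne'
    measure_ball_lt_top.ne
  refine ⟨2 * R / ε * (d * 3 ^ d) * ((M + ε) ^ d * v₁) / v₀, fun J hJ =>
    ⟨fun n => 1 + 2 * R / (ε * lengthScale (J n)), fun n => ?_, ?_, ?_⟩⟩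
  · have := lengthScale_nonneg (J n)
    have : 0 ≤ 2 * R / (ε * lengthScale (J n)) := by positivity
    linarith
  · have hlim : Tendsto (fun n => 2 * R / (ε * lengthScale (J n))) atTop (𝓝 0) :=
      ((hJ.tendsto_lengthScale hd).const_mul_atTop hε).const_div_atTop _
    simpa using hlim.const_add 1
  · have hlarge := ((hJ.tendsto_lengthScale hd).const_mul_atTop hε).eventually
      (eventually_ge_atTop (2 * R))
    filter_upwards [hJ.eventually_ball_subset hd hO hε hball' hM, hlarge] with n hn hl
    obtain ⟨hin, hout⟩ := hn
    have hr : 0 < ε * lengthScale (J n) := by linarith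
    have hls : 0 < lengthScale (J n) := pos_of_mul_pos_right hr hε.le
    have hconv := (hJ.1 n).2.1
    refine ⟨fun z hz w hw => add_mem_add_smul hconv hr (by linarith) zero_le_one hin
      (by simpa using hz) hw, ?_⟩
    have hcount := ncard_latOf_smul_diff_le (s := 2 * R / (ε * lengthScale (J n)))
      (hJ.1 n).1 hconv hr ((div_le_one hr).2 hl) (by gcongr; linarith) hin
    have hvol : volume.real (J n) ≤ ((M + ε) * lengthScale (J n)) ^ d * v₁ := by
      refine (measureReal_mono hout measure_closedBall_lt_top.ne).trans_eq ?_
      rw [measureReal_def, Measure.addHaar_closedBall' _ _ (by positivity), ENNReal.toReal_mul,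
        ENNReal.toReal_ofReal (by positivity), finrank_euclideanSpace_fin, hv₁, measureReal_def]
    rw [div_mul_eq_mul_div, le_div_iff₀ hv₀pos]
    refine hcount.trans ((mul_le_mul_of_nonneg_left hvol (by positivity)).trans_eq ?_)
    have hpow : lengthScale (J n) ^ d = lengthScale (J n) * per (J n) := by
      rw [← lengthScale_pow hd (J n), ← pow_succ', Nat.sub_add_cancel (by lia)]
    rw [mul_pow, hpow]
    field_simp

end IsExhaustion

end Geometry

section Limsup

lemma limsup_le_mul_limsup_comp {v w c : ℕ → ℝ} {φ : ℕ → ℕ} {κ B : ℝ}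
    (hφ : Tendsto φ atTop atTop) (hc : Tendsto c atTop (𝓝 κ)) (hc0 : ∀ᶠ n in atTop, 0 ≤ c n)
    (hv0 : ∀ᶠ n in atTop, 0 ≤ v n) (hwB : ∀ᶠ n in atTop, w n ≤ B)
    (hvw : ∀ᶠ n in atTop, v n ≤ c n * w (φ n)) :
    limsup v atTop ≤ κ * limsup w atTop := by
  have hub : ∀ t, limsup w atTop < t → limsup v atTop ≤ κ * t := fun t ht => by
    have hwt := hφ.eventually
      (eventually_lt_of_limsup_lt ht (isBoundedUnder_of_eventually_le hwB))
    have hct := hc.mul_const t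
    rw [← hct.limsup_eq]
    refine limsup_le_limsup ?_ (isCoboundedUnder_le_of_eventually_le atTop hv0)
      hct.isBoundedUnder_le
    filter_upwards [hwt, hvw, hc0] with n h1 h2 h3
    exact h2.trans (mul_le_mul_of_nonneg_left h1.le h3)
  refine ge_of_tendsto (x := 𝓝[>] (limsup w atTop)) (f := fun t => κ * t)
    ((continuous_const_mul κ).tendsto _ |>.mono_left nhdsWithin_le_nhds) ?_
  filter_upwards [self_mem_nhdsWithin] with t ht using hub t ht

lemma limsup_nonneg_of_eventually_le {v : ℕ → ℝ} {B : ℝ} (hv0 : ∀ᶠ n in atTop, 0 ≤ v n)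
    (hvB : ∀ᶠ n in atTop, v n ≤ B) : 0 ≤ limsup v atTop :=
  le_limsup_of_frequently_le hv0.frequently (isBoundedUnder_of_eventually_le hvB)

end Limsup

section Entropy

universe u

variable {A : Type u} {d : ℕ}

/-- The `L`-patterns seen along the first `n` steps of the orbit. -/
def pattern (f : Config A d → Config A d) (n : ℕ) (L : Set (Zd d)) (x : Config A d) :
    Fin n → L → A := fun k j => f^[k] x j

lemma pattern_eq_iff {f : Config A d → Config A d} {n : ℕ} {L : Set (Zd d)} {x y : Config A d} :
    pattern f n L x = pattern f n L y ↔ ∀ t < n, ∀ z ∈ L, f^[t] x z = f^[t] y z := by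
  simp [pattern, funext_iff, Fin.forall_iff]

lemma setOf_pattern_eq (f : Config A d → Config A d) (n : ℕ) (L : Set (Zd d))
    (Q : Fin n → L → A) :
    {x | pattern f n L x = Q} = {x | ∀ (k : Fin n) (j : L), f^[k] x (j : Zd d) = Q k j} := by
  ext x
  simp [pattern, funext_iff]

lemma log_card_pattern [Finite A] (n : ℕ) {L : Set (Zd d)} (hL : L.Finite) :
    Real.log (Nat.card (Fin n → L → A)) = n * (L.ncard * Real.log (Nat.card A)) := by
  have := hL.to_subtype
  simp [Nat.card_fun, Nat.card_coe_set_eq]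

variable [MeasurableSpace A] {X : Set (Config A d)}

/-- A map all of whose level sets are measurable. -/
def IsObservable {F : Type*} (φ : Config A d → F) : Prop := ∀ q, MeasurableSet {x | φ x = q}

/-- The features shared by the topological and the measure-theoretic entropy of finite-valued
observables on `X`. -/
structure EntropyFunctional (X : Set (Config A d)) where
  /-- The entropy of an observable. -/
  toFun : ∀ {F : Type u}, (Config A d → F) → ℝ
  nonneg : ∀ {F : Type u} [Finite F] {φ : Config A d → F}, 0 ≤ toFun φ
  mono : ∀ {F G : Type u} [Finite F] [Finite G] {φ : Config A d → F} {ψ : Config A d → G},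
    IsObservable φ → (∀ x ∈ X, ∀ y ∈ X, φ x = φ y → ψ x = ψ y) → toFun ψ ≤ toFun φ
  le_log_card : ∀ {F : Type u} [Finite F] {φ : Config A d → F}, IsObservable φ →
    toFun φ ≤ Real.log (Nat.card F)

lemma isObservable_pattern [DiscreteMeasurableSpace A] {f : Config A d → Config A d}
    (hf : Measurable f) (n : ℕ) (L : Set (Zd d)) : IsObservable (pattern f n L) := by
  intro Q
  rw [setOf_pattern_eq]
  simp only [ofPred_forall]
  exact MeasurableSet.iInter fun k => MeasurableSet.iInter fun j =>
    ((measurable_pi_apply _).comp (hf.iterate k)) (MeasurableSet.of_discrete (s := {Q k j}))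

lemma IsObservable.prodMk {F G : Type*} {φ : Config A d → F} {ψ : Config A d → G}
    (hφ : IsObservable φ) (hψ : IsObservable ψ) : IsObservable fun x => (φ x, ψ x) := by
  rintro ⟨p, q⟩
  simpa [Prod.ext_iff, ofPred_and] using (hφ p).inter (hψ q)

namespace EntropyFunctional

variable (E : EntropyFunctional X)

/-- Entropy of `f` relative to the partition into `L`-cylinders. -/
noncomputable def partEnt (f : Config A d → Config A d) (L : Set (Zd d)) : ℝ :=
  limsup (fun n : ℕ => E.toFun (pattern f n L) / n) atTop

/-- Rescaled entropy of `f` with respect to the convex domain `O`. -/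
noncomputable def rescEnt (f : Config A d → Config A d)
    (O : Set (EuclideanSpace ℝ (Fin d))) : ℝ :=
  sSup {h | ∃ J, IsExhaustion O J ∧
    h = limsup (fun n => E.partEnt f (latOf (J n)) / per (J n)) atTop}

variable [Finite A] {f : Config A d → Config A d} {L L' : Set (Zd d)}

lemma pattern_div_nonneg (hL : L.Finite) (n : ℕ) : 0 ≤ E.toFun (pattern f n L) / n := by
  have := hL.to_subtype
  exact div_nonneg E.nonneg n.cast_nonneg

variable [DiscreteMeasurableSpace A]

lemma pattern_div_le (hf : Measurable f) (hL : L.Finite) (n : ℕ) :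
    E.toFun (pattern f n L) / n ≤ L.ncard * Real.log (Nat.card A) := by
  have := hL.to_subtype
  have hlog : 0 ≤ Real.log (Nat.card A) := Real.log_natCast_nonneg _
  refine div_le_of_le_mul₀ n.cast_nonneg (by positivity) ?_
  rw [mul_comm, ← log_card_pattern n hL]
  exact E.le_log_card (isObservable_pattern hf n L)

lemma partEnt_nonneg (hf : Measurable f) (hL : L.Finite) : 0 ≤ E.partEnt f L :=
  limsup_nonneg_of_eventually_le (.of_forall (E.pattern_div_nonneg hL))
    (.of_forall (E.pattern_div_le hf hL))

lemma partEnt_iterate_le (hf : Measurable f) (hL : L.Finite) {k : ℕ} (hk : 0 < k) :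
    E.partEnt f^[k] L ≤ k * E.partEnt f L := by
  have := hL.to_subtype
  refine limsup_le_mul_limsup_comp (φ := fun n => n * k) (c := fun _ => (k : ℝ))
    (tendsto_id.atTop_mul_const' hk) tendsto_const_nhds
    (.of_forall fun _ => k.cast_nonneg) (.of_forall (E.pattern_div_nonneg hL))
    (.of_forall (E.pattern_div_le hf hL)) (.of_forall fun n => ?_)
  have hmono : E.toFun (pattern f^[k] n L) ≤ E.toFun (pattern f (n * k) L) := by
    refine E.mono (isObservable_pattern hf _ _) fun x _ y _ hxy => ?_
    rw [pattern_eq_iff] at hxy ⊢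
    intro t ht z hz
    rw [← Function.iterate_mul, mul_comm]
    exact hxy _ (Nat.mul_lt_mul_of_pos_right ht hk) z hz
  have hk' : (k : ℝ) ≠ 0 := by positivity
  calc E.toFun (pattern f^[k] n L) / n ≤ E.toFun (pattern f (n * k) L) / n := by gcongr
    _ = k * (E.toFun (pattern f (n * k) L) / ((n * k : ℕ) : ℝ)) := by
      push_cast
      rw [mul_comm (n : ℝ), ← div_div, mul_div_assoc', mul_div_cancel₀ _ hk']

lemma mul_partEnt_le (hf : Measurable f) (hX : MapsTo f X X) (hL : L.Finite) (hL' : L'.Finite)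
    {k : ℕ} (hk : 0 < k)
    (hdet : ∀ l < k, ∀ x ∈ X, ∀ y ∈ X, (∀ w ∈ L', x w = y w) → ∀ z ∈ L, f^[l] x z = f^[l] y z) :
    k * E.partEnt f L ≤ E.partEnt f^[k] L' := by
  have := hL.to_subtype
  have := hL'.to_subtype
  have hk' : (0 : ℝ) < k := by positivity
  rw [← le_inv_mul_iff₀ hk']
  have hlim : Tendsto (fun m : ℕ => (k : ℝ)⁻¹ + 1 / (m : ℝ)) atTop (𝓝 (k : ℝ)⁻¹) := by
    simpa using tendsto_one_div_atTop_nhds_zero_nat.const_add (k : ℝ)⁻¹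
  refine limsup_le_mul_limsup_comp (φ := fun m => m / k + 1)
    ((tendsto_add_atTop_nat 1).comp (Nat.tendsto_div_const_atTop hk.ne')) hlim
    (.of_forall fun _ => by positivity) (.of_forall (E.pattern_div_nonneg hL))
    (.of_forall (E.pattern_div_le (hf.iterate k) hL')) ?_
  filter_upwards [eventually_gt_atTop 0] with m hm
  have hmono : E.toFun (pattern f m L) ≤ E.toFun (pattern f^[k] (m / k + 1) L') := by
    refine E.mono (isObservable_pattern (hf.iterate k) _ _) fun x hx y hy hxy => ?_
    rw [pattern_eq_iff] at hxy ⊢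
    intro t ht z hz
    have hxX := (hX.iterate k).iterate (t / k) hx
    have hyX := (hX.iterate k).iterate (t / k) hy
    have hq := hxy (t / k) (Nat.lt_succ_of_le (Nat.div_le_div_right ht.le))
    have hz' := hdet (t % k) (Nat.mod_lt _ hk) _ hxX _ hyX hq z hz
    rw [← Function.iterate_mul, ← Function.iterate_add_apply, ← Function.iterate_add_apply,
      Nat.mod_add_div] at hz'
    exact hz'
  have hm' : (0 : ℝ) < m := by positivity
  have hq : ((m / k + 1 : ℕ) : ℝ) / m ≤ (k : ℝ)⁻¹ + 1 / m := by
    rw [div_le_iff₀ hm', add_mul, one_div_mul_cancel hm'.ne', inv_mul_eq_div]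
    push_cast
    gcongr
    exact Nat.cast_div_le
  calc E.toFun (pattern f m L) / m ≤ E.toFun (pattern f^[k] (m / k + 1) L') / m := by gcongr
    _ = ((m / k + 1 : ℕ) : ℝ) / m *
        (E.toFun (pattern f^[k] (m / k + 1) L') / ((m / k + 1 : ℕ) : ℝ)) := by
      field_simp
    _ ≤ _ := mul_le_mul_of_nonneg_right hq (E.pattern_div_nonneg hL' _)

lemma partEnt_le_ncard_diff (hf : Measurable f) (hX : MapsTo f X X) (hL : L.Finite)
    (hL' : L'.Finite)
    (hdet : ∀ x ∈ X, ∀ y ∈ X, (∀ w ∈ L', x w = y w) → ∀ z ∈ L, f x z = f y z) :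
    E.partEnt f L ≤ (L' \ L).ncard * Real.log (Nat.card A) := by
  have := hL.to_subtype
  have hB : (L' \ L).Finite := hL'.sdiff
  have := hB.to_subtype
  have hlim : Tendsto (fun n : ℕ => (L.ncard * Real.log (Nat.card A)) / (n : ℝ) +
      (L' \ L).ncard * Real.log (Nat.card A)) atTop
      (𝓝 ((L' \ L).ncard * Real.log (Nat.card A))) := by
    simpa using (tendsto_const_div_atTop_nhds_zero_nat
      (L.ncard * Real.log (Nat.card A))).add_const ((L' \ L).ncard * Real.log (Nat.card A))
  rw [← hlim.limsup_eq]
  refine limsup_le_limsup ?_ (isCoboundedUnder_le_of_eventually_le atTop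
    (.of_forall (E.pattern_div_nonneg hL))) hlim.isBoundedUnder_le
  filter_upwards [eventually_gt_atTop 0] with n hn
  have hobs := (isObservable_pattern hf 1 L).prodMk (isObservable_pattern hf n (L' \ L))
  have hmono := E.mono (ψ := pattern f n L) hobs fun x hx y hy hxy => by
    obtain ⟨h1, h2⟩ := Prod.ext_iff.1 hxy
    rw [pattern_eq_iff] at h1 h2 ⊢
    intro t
    induction t with
    | zero => exact fun _ => h1 0 one_pos
    | succ t ih =>
      intro ht z hz
      rw [Function.iterate_succ_apply', Function.iterate_succ_apply']
      refine hdet _ (hX.iterate t hx) _ (hX.iterate t hy) (fun w hw => ?_) z hz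
      by_cases hwL : w ∈ L
      · exact ih (by lia) w hwL
      · exact h2 t (by lia) w ⟨hw, hwL⟩
  have hcard := hmono.trans (E.le_log_card hobs)
  rcases isEmpty_or_nonempty ((Fin 1 → L → A) × (Fin n → ↥(L' \ L) → A)) with he | hne
  · have hlog : 0 ≤ Real.log (Nat.card A) := Real.log_natCast_nonneg _
    rw [Nat.card_of_isEmpty, Nat.cast_zero, Real.log_zero] at hcard
    exact (div_nonpos_of_nonpos_of_nonneg hcard n.cast_nonneg).trans (by positivity)
  · obtain ⟨hne₁, hne₂⟩ := nonempty_prod.1 hne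
    rw [Nat.card_prod, Nat.cast_mul,
      Real.log_mul (Nat.cast_ne_zero.2 Nat.card_pos.ne') (Nat.cast_ne_zero.2 Nat.card_pos.ne'),
      log_card_pattern 1 hL, log_card_pattern n hB, Nat.cast_one, one_mul] at hcard
    have hn' : (0 : ℝ) < n := by positivity
    rw [div_le_iff₀ hn', add_mul, div_mul_cancel₀ _ hn'.ne']
    linarith

end EntropyFunctional

end Entropy

section CellularAutomaton

variable {A : Type*} {d : ℕ}

lemma exists_radius [Finite A] [TopologicalSpace A] [DiscreteTopology A] {X : Set (Config A d)}
    (hXcl : IsClosed X) (hXinv : ∀ l : Zd d, ∀ x ∈ X, shift l x ∈ X)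
    {f : Config A d → Config A d} (hfc : Continuous f)
    (hcomm : ∀ l : Zd d, ∀ x ∈ X, f (shift l x) = shift l (f x)) :
    ∃ R : ℝ, ∀ x ∈ X, ∀ y ∈ X, ∀ z : Zd d,
      (∀ w : Zd d, ‖emb w - emb z‖ ≤ R → x w = y w) → f x z = f y z := by
  have hloc : ∀ x : Config A d, ∃ I : Finset (Zd d), ∀ y : Config A d,
      (∀ i ∈ I, y i = x i) → f y 0 = f x 0 := by
    intro x
    have hopen : IsOpen {y : Config A d | f y 0 = f x 0} :=
      (isOpen_discrete {f x 0}).preimage ((continuous_apply 0).comp hfc)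
    obtain ⟨I, V, hV, hsub⟩ := isOpen_pi_iff.1 hopen x rfl
    exact ⟨I, fun y hy => hsub fun i hi => by rw [hy i hi]; exact (hV i hi).2⟩
  choose I hI using hloc
  have hcyl : ∀ x : Config A d, {y : Config A d | ∀ i ∈ I x, y i = x i} ∈ 𝓝 x := fun x => by
    refine IsOpen.mem_nhds ?_ fun i _ => rfl
    simpa [Set.pi] using isOpen_set_pi (I x).finite_toSet
      fun i _ => isOpen_discrete ({x i} : Set A)
  obtain ⟨T, -, hT⟩ := hXcl.isCompact.elim_nhds_subcover _ fun x _ => hcyl x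
  have hfin : (⋃ x ∈ T, (I x : Set (Zd d))).Finite :=
    T.finite_toSet.biUnion fun x _ => (I x).finite_toSet
  obtain ⟨R, hR⟩ := (hfin.image emb).isBounded.exists_norm_le
  refine ⟨R, fun x hx y hy z hxy => ?_⟩
  have key : f (shift z x) 0 = f (shift z y) 0 := by
    obtain ⟨t, ht, hxt⟩ := mem_iUnion₂.1 (hT (hXinv z x hx))
    rw [hI t _ hxt]
    refine (hI t _ fun i hi => ?_).symm
    rw [← hxt i hi]
    refine (hxy (i + z) ?_).symm
    have hemb : emb (i + z) - emb z = emb i := by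
      ext j
      simp [emb]
    rw [hemb]
    exact hR _ ⟨i, mem_iUnion₂.2 ⟨t, ht, hi⟩, rfl⟩
  simpa [hcomm z x hx, hcomm z y hy, shift] using key

lemma iterate_shift {X : Set (Config A d)} {f : Config A d → Config A d} (hf : MapsTo f X X)
    (hcomm : ∀ l : Zd d, ∀ x ∈ X, f (shift l x) = shift l (f x)) (k : ℕ) (l : Zd d) :
    ∀ x ∈ X, f^[k] (shift l x) = shift l (f^[k] x) := by
  induction k with
  | zero => exact fun _ _ => rfl
  | succ k ih =>
    intro x hx
    rw [Function.iterate_succ_apply, Function.iterate_succ_apply, hcomm l x hx, ih _ (hf hx)]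

lemma exists_radius_iterate [Finite A] [TopologicalSpace A] [DiscreteTopology A]
    {X : Set (Config A d)} (hXcl : IsClosed X) (hXinv : ∀ l : Zd d, ∀ x ∈ X, shift l x ∈ X)
    {f : Config A d → Config A d} (hf : MapsTo f X X) (hfc : Continuous f)
    (hcomm : ∀ l : Zd d, ∀ x ∈ X, f (shift l x) = shift l (f x)) (k : ℕ) :
    ∃ R : ℝ, 1 ≤ R ∧ ∀ l ≤ k, ∀ x ∈ X, ∀ y ∈ X, ∀ z : Zd d,
      (∀ w : Zd d, ‖emb w - emb z‖ ≤ R → x w = y w) → f^[l] x z = f^[l] y z := by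
  choose R hR using fun l : ℕ =>
    exists_radius hXcl hXinv (hfc.iterate l) (iterate_shift hf hcomm l)
  obtain ⟨M, hM⟩ := ((Set.finite_Iic k).image R).bddAbove
  refine ⟨max 1 M, le_max_left _ _, fun l hl x hx y hy z hxy => hR l x hx y hy z fun w hw => ?_⟩
  exact hxy w (hw.trans ((hM ⟨l, hl, rfl⟩).trans (le_max_right _ _)))

end CellularAutomaton

namespace EntropyFunctional

universe u

variable {A : Type u} {d : ℕ} [Finite A] [MeasurableSpace A] [DiscreteMeasurableSpace A]
  {X : Set (Config A d)} {f : Config A d → Config A d} {O : Set (EuclideanSpace ℝ (Fin d))}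

lemma partEnt_id (E : EntropyFunctional X) {L : Set (Zd d)} (hL : L.Finite) :
    E.partEnt id L = 0 := by
  refine le_antisymm ?_ (E.partEnt_nonneg measurable_id hL)
  simpa using E.partEnt_le_ncard_diff (f := id) (L' := L) measurable_id (mapsTo_id X) hL hL
    fun x _ y _ hxy => hxy

lemma rescEnt_id (E : EntropyFunctional X) : E.rescEnt id O = 0 := by
  have hsub : {h | ∃ J, IsExhaustion O J ∧
      h = limsup (fun n => E.partEnt id (latOf (J n)) / per (J n)) atTop} ⊆ {0} := by
    rintro _ ⟨J, hJ, rfl⟩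
    simp [fun n => E.partEnt_id (finite_latOf (hJ.1 n).1.isBounded)]
  rcases subset_singleton_iff_eq.1 hsub with h | h <;> simp [rescEnt, h]

variable [TopologicalSpace A] [DiscreteTopology A]

theorem rescEnt_iterate (E : EntropyFunctional X) (hd : 2 ≤ d) (hXcl : IsClosed X)
    (hXinv : ∀ l : Zd d, ∀ x ∈ X, shift l x ∈ X) (hf : MapsTo f X X) (hfm : Measurable f)
    (hfc : Continuous f) (hcomm : ∀ l : Zd d, ∀ x ∈ X, f (shift l x) = shift l (f x))
    (hOc : IsCompact O) (hO0 : 0 ∈ interior O) (k : ℕ) :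
    E.rescEnt f^[k] O = k * E.rescEnt f O := by
  rcases k.eq_zero_or_pos with rfl | hk
  · simpa using E.rescEnt_id
  obtain ⟨R, hR, hloc⟩ := exists_radius_iterate hXcl hXinv hf hfc hcomm k
  obtain ⟨C, hC⟩ := IsExhaustion.exists_dilation hd hOc hO0 hR
  have hlat : ∀ {J}, IsExhaustion O J → ∀ n, (latOf (J n)).Finite :=
    fun hJ n => finite_latOf (hJ.1 n).1.isBounded
  have hdet : ∀ {J J' : Set (EuclideanSpace ℝ (Fin d))},
      (∀ z ∈ J, ∀ w, ‖w‖ ≤ R → z + w ∈ J') → ∀ l ≤ k, ∀ x ∈ X, ∀ y ∈ X,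
      (∀ w ∈ latOf J', x w = y w) → ∀ z ∈ latOf J, f^[l] x z = f^[l] y z := by
    intro J J' hJJ' l hl x hx y hy hxy z hz
    refine hloc l hl x hx y hy z fun w hw => hxy w ?_
    simpa [latOf] using hJJ' _ hz _ hw
  have hnonneg : ∀ {J}, IsExhaustion O J → ∀ l n,
      0 ≤ E.partEnt f^[l] (latOf (J n)) / per (J n) := fun hJ l n =>
    div_nonneg (E.partEnt_nonneg (hfm.iterate l) (hlat hJ n)) (per_nonneg _)
  have hbound : ∀ {J}, IsExhaustion O J → ∀ l ≤ k, ∀ᶠ n in atTop,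
      E.partEnt f^[l] (latOf (J n)) / per (J n) ≤ C * Real.log (Nat.card A) := by
    intro J hJ l hl
    obtain ⟨c, hc1, -, hc⟩ := hC J hJ
    filter_upwards [hc, hJ.2.1.eventually_gt_atTop 0] with n hn hper
    rw [div_le_iff₀ hper, mul_right_comm]
    refine (E.partEnt_le_ncard_diff (hfm.iterate l) (hf.iterate l) (hlat hJ n)
      (hlat (hJ.smul hd hc1) n) (hdet hn.1 l hl)).trans ?_
    exact mul_le_mul_of_nonneg_right hn.2 (Real.log_natCast_nonneg _)
  have hbdd : ∀ l ≤ k, BddAbove {h | ∃ J, IsExhaustion O J ∧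
      h = limsup (fun n => E.partEnt f^[l] (latOf (J n)) / per (J n)) atTop} := by
    rintro l hl
    refine ⟨C * Real.log (Nat.card A), ?_⟩
    rintro _ ⟨J, hJ, rfl⟩
    exact limsup_le_of_le (isCoboundedUnder_le_of_eventually_le atTop
      (.of_forall (hnonneg hJ l))) (hbound hJ l hl)
  have hupper : ∀ {J}, IsExhaustion O J →
      limsup (fun n => E.partEnt f^[k] (latOf (J n)) / per (J n)) atTop ≤
        k * limsup (fun n => E.partEnt f (latOf (J n)) / per (J n)) atTop := by
    intro J hJ
    refine limsup_le_mul_limsup_comp (φ := id) tendsto_id tendsto_const_nhds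
      (.of_forall fun _ => k.cast_nonneg) (.of_forall (hnonneg hJ k)) (hbound hJ 1 hk)
      (.of_forall fun n => ?_)
    rw [← mul_div_assoc]
    exact div_le_div_of_nonneg_right (E.partEnt_iterate_le hfm (hlat hJ n) hk) (per_nonneg _)
  have hlower : ∀ {J}, IsExhaustion O J → ∃ J', IsExhaustion O J' ∧
      k * limsup (fun n => E.partEnt f (latOf (J n)) / per (J n)) atTop ≤
        limsup (fun n => E.partEnt f^[k] (latOf (J' n)) / per (J' n)) atTop := by
    intro J hJ
    obtain ⟨c, hc1, hclim, hc⟩ := hC J hJ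
    have hJ' := hJ.smul hd hc1
    have hk' : (0 : ℝ) < k := by positivity
    refine ⟨_, hJ', ?_⟩
    rw [← le_inv_mul_iff₀ hk']
    have hlim : Tendsto (fun n => (k : ℝ)⁻¹ * c n ^ (d - 1)) atTop (𝓝 (k : ℝ)⁻¹) := by
      simpa using (hclim.pow (d - 1)).const_mul (k : ℝ)⁻¹
    have hcpos : ∀ n, 0 < c n := fun n => one_pos.trans_le (hc1 n)
    refine limsup_le_mul_limsup_comp (φ := id) tendsto_id hlim
      (.of_forall fun n => by have := hcpos n; positivity) (.of_forall (hnonneg hJ 1))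
      (hbound hJ' k le_rfl) ?_
    filter_upwards [hc] with n hn
    have hle := E.mul_partEnt_le hfm hf (hlat hJ n) (hlat hJ' n) hk
      fun l hl => hdet hn.1 l hl.le
    have hcn := hcpos n
    rw [id_eq, per_smul hd hcn, mul_assoc, mul_div_assoc', mul_div_mul_left _ _ (by positivity),
      mul_div_assoc']
    refine div_le_div_of_nonneg_right ?_ (per_nonneg _)
    rwa [le_inv_mul_iff₀ hk']
  by_cases hex : ∃ J, IsExhaustion O J
  · obtain ⟨J₀, hJ₀⟩ := hex
    have hk' : (0 : ℝ) < k := by positivity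
    refine le_antisymm (csSup_le ⟨_, J₀, hJ₀, rfl⟩ ?_) ?_
    · rintro _ ⟨J, hJ, rfl⟩
      exact (hupper hJ).trans (mul_le_mul_of_nonneg_left
        (le_csSup (hbdd 1 hk) ⟨J, hJ, rfl⟩) k.cast_nonneg)
    · rw [← le_inv_mul_iff₀ hk']
      refine csSup_le ⟨_, J₀, hJ₀, rfl⟩ ?_
      rintro _ ⟨J, hJ, rfl⟩
      obtain ⟨J', hJ', hle⟩ := hlower hJ
      rw [le_inv_mul_iff₀ hk']
      exact hle.trans (le_csSup (hbdd k le_rfl) ⟨J', hJ', rfl⟩)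
  · push Not at hex
    simp [rescEnt, hex]

end EntropyFunctional

section Functionals

universe u

variable {A : Type u} {d : ℕ} [MeasurableSpace A]

/-- Topological entropy: the logarithm of the number of values taken on `X`. -/
noncomputable def topEntropyFunctional (X : Set (Config A d)) (hX : X.Nonempty) :
    EntropyFunctional X where
  toFun φ := Real.log (Nat.card (φ '' X))
  nonneg := Real.log_natCast_nonneg _
  mono {F G} _ _ φ ψ _ h := by
    have := (hX.image ψ).to_subtype
    have := hX.to_type
    refine Real.log_le_log (Nat.cast_pos.2 Nat.card_pos) (Nat.cast_le.2 ?_)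
    choose! s hs using fun p (hp : p ∈ φ '' X) => hp
    refine Nat.card_le_card_of_surjective (fun p : φ '' X => ⟨ψ (s p), s p, (hs p p.2).1, rfl⟩) ?_
    rintro ⟨_, x, hx, rfl⟩
    have hx' : φ x ∈ φ '' X := ⟨x, hx, rfl⟩
    exact ⟨⟨φ x, hx'⟩, Subtype.ext (h _ (hs _ hx').1 _ hx (hs _ hx').2)⟩
  le_log_card {F} _ φ _ := by
    have := (hX.image φ).to_subtype
    exact Real.log_le_log (Nat.cast_pos.2 Nat.card_pos) (Nat.cast_le.2 (Finite.card_subtype_le _))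

lemma negMulLog_sum_le {ι : Type*} (s : Finset ι) {a : ι → ℝ} (ha : ∀ i ∈ s, 0 ≤ a i) :
    Real.negMulLog (∑ i ∈ s, a i) ≤ ∑ i ∈ s, Real.negMulLog (a i) := by
  rw [Real.negMulLog, neg_mul, Finset.sum_mul, ← Finset.sum_neg_distrib]
  refine Finset.sum_le_sum fun i hi => ?_
  rcases (ha i hi).eq_or_lt with h | h
  · simp [← h]
  · rw [Real.negMulLog, neg_mul, neg_le_neg_iff]
    exact mul_le_mul_of_nonneg_left (Real.log_le_log h (Finset.single_le_sum ha hi)) h.le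

lemma negMulLog_le_mul_log_add {p N : ℝ} (hp : 0 ≤ p) (hN : 0 < N) :
    Real.negMulLog p ≤ p * Real.log N + (1 / N - p) := by
  rcases hp.eq_or_lt with rfl | hp
  · simpa using hN.le
  · have hlog := Real.log_le_sub_one_of_pos (x := (p * N)⁻¹) (by positivity)
    rw [Real.log_inv, Real.log_mul hp.ne' hN.ne'] at hlog
    have hmul := mul_le_mul_of_nonneg_left hlog hp.le
    have hcancel : p * ((p * N)⁻¹ - 1) = 1 / N - p := by field_simp
    rw [hcancel] at hmul
    rw [Real.negMulLog]
    linarith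

/-- Shannon entropy of the distribution of an observable. -/
noncomputable def measEntropyFunctional (μ : Measure (Config A d)) [IsProbabilityMeasure μ]
    (X : Set (Config A d)) (hX : ∀ᵐ x ∂μ, x ∈ X) : EntropyFunctional X where
  toFun {F} φ := ∑' q : F, Real.negMulLog (μ {x | φ x = q}).toReal
  nonneg {F} _ φ := tsum_nonneg fun q =>
    Real.negMulLog_nonneg ENNReal.toReal_nonneg measureReal_le_one
  mono {F G} _ _ φ ψ hφ h := by
    classical
    have := Fintype.ofFinite F
    have := Fintype.ofFinite G
    have : Nonempty (Config A d) := hX.exists.nonempty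
    choose! s hs using fun p (hp : p ∈ φ '' X) => hp
    have hae : ∀ᵐ x ∂μ, ψ x = ψ (s (φ x)) := by
      filter_upwards [hX] with x hx
      have hx' : φ x ∈ φ '' X := ⟨x, hx, rfl⟩
      exact (h _ (hs _ hx').1 _ hx (hs _ hx').2).symm
    have hfib : ∀ q, (μ {x | ψ x = q}).toReal =
        ∑ p with ψ (s p) = q, (μ {x | φ x = p}).toReal := by
      intro q
      have hdisj : ((Finset.univ.filter fun p => ψ (s p) = q : Finset F) : Set F).PairwiseDisjoint
          fun p => {x | φ x = p} := by
        intro p _ p' _ hpp'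
        exact Set.disjoint_left.2 fun x hx hx' => hpp' (hx.symm.trans hx')
      have hunion := measureReal_biUnion_finset (μ := μ) hdisj (fun p _ => hφ p)
      simp only [measureReal_def] at hunion
      rw [← hunion]
      congr 1
      refine measure_congr ?_
      filter_upwards [hae] with x hx
      refine propext ?_
      change ψ x = q ↔ x ∈ ⋃ p ∈ _, {x | φ x = p}
      simp [hx]
    rw [tsum_fintype, tsum_fintype,
      ← Finset.sum_fiberwise (s := Finset.univ) (g := fun p => ψ (s p))]
    refine Finset.sum_le_sum fun q _ => ?_
    rw [hfib]
    exact negMulLog_sum_le _ fun _ _ => ENNReal.toReal_nonneg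
  le_log_card {F} _ φ hφ := by
    have := Fintype.ofFinite F
    obtain ⟨x₀, -⟩ := hX.exists
    have : Nonempty F := ⟨φ x₀⟩
    have hN : (0 : ℝ) < Nat.card F := Nat.cast_pos.2 Nat.card_pos
    have hsum : ∑ q, (μ {x | φ x = q}).toReal = 1 := by
      have hunion := measureReal_biUnion_finset (μ := μ) (s := Finset.univ)
        (f := fun q => {x | φ x = q})
        (fun p _ p' _ hpp' => Set.disjoint_left.2 fun x hx hx' => hpp' (hx.symm.trans hx'))
        (fun q _ => hφ q)
      have huniv : (⋃ q ∈ (Finset.univ : Finset F), {x | φ x = q}) = univ := by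
        ext x
        simp
      rw [huniv, probReal_univ] at hunion
      exact hunion.symm
    rw [tsum_fintype]
    refine (Finset.sum_le_sum fun q _ =>
      negMulLog_le_mul_log_add (ENNReal.toReal_nonneg (a := μ {x | φ x = q})) hN).trans_eq ?_
    rw [Finset.sum_add_distrib, Finset.sum_sub_distrib, ← Finset.sum_mul, hsum, Finset.sum_const,
      Finset.card_univ, ← Nat.card_eq_fintype_card, nsmul_eq_mul, mul_one_div_cancel hN.ne',
      one_mul, sub_self, add_zero]

lemma rescEnt_topEntropyFunctional (X : Set (Config A d)) (hX : X.Nonempty)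
    (f : Config A d → Config A d) (O : Set (EuclideanSpace ℝ (Fin d))) :
    (topEntropyFunctional X hX).rescEnt f O = topRescEnt f X O := rfl

lemma rescEnt_measEntropyFunctional (μ : Measure (Config A d)) [IsProbabilityMeasure μ]
    (X : Set (Config A d)) (hX : ∀ᵐ x ∂μ, x ∈ X) (f : Config A d → Config A d)
    (O : Set (EuclideanSpace ℝ (Fin d))) :
    (measEntropyFunctional μ X hX).rescEnt f O = measRescEnt μ f O := by
  simp only [EntropyFunctional.rescEnt, EntropyFunctional.partEnt, measEntropyFunctional,
    setOf_pattern_eq, measRescEnt, measPartEnt]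

end Functionals

theorem stmt19 {d : ℕ} {A : Type*} [Fintype A] [TopologicalSpace A] [DiscreteTopology A]
    [MeasurableSpace A] [DiscreteMeasurableSpace A]
    (X : Set (Config A d)) (hXcl : IsClosed X) (hXne : X.Nonempty)
    (hXinv : ∀ l : Zd d, ∀ x ∈ X, shift l x ∈ X)
    (f : Config A d → Config A d) (hf : Set.MapsTo f X X) (hfm : Measurable f)
    (hfc : Continuous f)
    (hcomm : ∀ l : Zd d, ∀ x ∈ X, f (shift l x) = shift l (f x))
    (O : Set (EuclideanSpace ℝ (Fin d)))
    (hOc : IsCompact O) (hOconv : Convex ℝ O) (hO0 : 0 ∈ interior O)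
    (hOper : per O = 1) :
    ∀ k : ℕ,
      topRescEnt (f^[k]) X O = k * topRescEnt f X O ∧
      ∀ μ : Measure (Config A d), IsProbabilityMeasure μ → μ.map f = μ → μ X = 1 →
        measRescEnt μ (f^[k]) O = k * measRescEnt μ f O := by
  have hd := two_le_of_per_eq_one hOc hO0 hOper
  refine fun k => ⟨?_, fun μ hμ _ hμX => ?_⟩
  · rw [← rescEnt_topEntropyFunctional X hXne, ← rescEnt_topEntropyFunctional X hXne]
    exact EntropyFunctional.rescEnt_iterate _ hd hXcl hXinv hf hfm hfc hcomm hOc hO0 k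
  · have hX : ∀ᵐ x ∂μ, x ∈ X := (mem_ae_iff_prob_eq_one hXcl.measurableSet).2 hμX
    rw [← rescEnt_measEntropyFunctional μ X hX, ← rescEnt_measEntropyFunctional μ X hX]
    exact EntropyFunctional.rescEnt_iterate _ hd hXcl hXinv hf hfm hfc hcomm hOc hO0 k
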